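/- Let H be a (finite) graph and let ε > 0. Then there exists a constant c₁ = c₁(H, ε) > 0 such that every graph G on n vertices that does not contain H as an induced subgraph has the following property: there is a subset U of the vertex set of G with |U| ≥ c₁·n such that the induced subgraph G[U] has at most ε·binom(|U|,2) edges, or G[U] has at least (1 − ε)·binom(|U|,2) edges. -/

import Mathlib

/-!
Embed `H` greedily, one vertex at a time, keeping for every unplaced vertex a large set of
candidates. The embedding can only get stuck if many vertices of some candidate set have few
neighbours, or few non-neighbours, in another one. So if `G` has no induced copy of `H`, every large
vertex set contains two large disjoint sets `A`, `B` with very few edges, or very few non-edges,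
between them.

Inside `A`, and then inside the vertices of `B` that are typical with respect to the subset found in
`A`, look recursively for sparse subsets of the same colour (`G` or its complement). If both have
edge density at most `2⁻ᵇ + η`, their union has edge density at most `2⁻⁽ᵇ⁺¹⁾ + η`; if one of the
searches yields the other colour instead, it has already succeeded. After boundedly many rounds one
of the two colours has been halved often enough.
-/

/-- The graph `H` is contained in the graph `G` as an induced subgraph. -/
def ContainsInduced {a b : ℕ} (H : SimpleGraph (Fin a)) (G : SimpleGraph (Fin b)) : Prop :=
  ∃ φ : Fin a → Fin b, Function.Injective φ ∧ ∀ u v : Fin a, H.Adj u v ↔ G.Adj (φ u) (φ v)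

/-- The number of edges of the subgraph of `G` induced by `U`. -/
noncomputable def edgeCountIn {V : Type*} (G : SimpleGraph V) (U : Finset V) : ℕ :=
  {e : Sym2 V | e ∈ G.edgeSet ∧ ∀ v ∈ e, v ∈ U}.ncard

open Finset Function
open scoped SimpleGraph

variable {α ι : Type*} {V : Type*}

theorem containsInduced_iff_isIndContained {a b : ℕ} {H : SimpleGraph (Fin a)}
    {G : SimpleGraph (Fin b)} : ContainsInduced H G ↔ H ⊴ G :=
  ⟨fun ⟨φ, hφ, h⟩ ↦ ⟨⟨⟨φ, hφ⟩, (h _ _).symm⟩⟩,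
    fun ⟨f⟩ ↦ ⟨f, f.injective, fun _ _ ↦ f.map_adj_iff.symm⟩⟩

theorem exists_pairwise_disjoint_subsets [Fintype α] {t : ℕ} {W : Finset V}
    (h : Fintype.card α * t ≤ #W) :
    ∃ C : α → Finset V, Pairwise (Disjoint on C) ∧ ∀ i, C i ⊆ W ∧ #(C i) = t := by
  obtain ⟨f⟩ : Nonempty (α × Fin t ↪ W) := Embedding.nonempty_of_card_le (by simpa using h)
  let g : α × Fin t ↪ V := f.trans (.subtype _)
  refine ⟨fun i ↦ univ.map ((Embedding.sectR i (Fin t)).trans g), fun i j hij ↦ ?_,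
    fun i ↦ ⟨?_, by simp⟩⟩
  · simp only [Function.onFun, disjoint_left, mem_map]
    rintro _ ⟨x, -, rfl⟩ ⟨y, -, hxy⟩
    exact hij (congrArg Prod.fst (g.injective hxy)).symm
  · intro v hv
    obtain ⟨x, -, rfl⟩ := mem_map.1 hv
    exact (f (i, x)).2

open Classical in
/-- `(A, B)` is a `δ`-sparse pair of `G`: the sets are disjoint and every vertex of `A` is adjacent
to at most a `δ` fraction of `B`. The condition is not symmetric in `A` and `B`. -/
structure IsSparsePair (G : SimpleGraph V) (δ : ℝ) (A B : Finset V) : Prop where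
  disjoint : Disjoint A B
  card_le : ∀ v ∈ A, (#{w ∈ B | G.Adj v w} : ℝ) ≤ δ * #B

/-- Some member of the family `F` has a `δ`-sparse pair in `W`, both sets having size at least `L`.
The application is to the two-member family of `G` and its complement. -/
def HasSparsePair (F : ι → SimpleGraph V) (δ : ℝ) (L : ℕ) (W : Finset V) : Prop :=
  ∃ i, ∃ A ⊆ W, ∃ B ⊆ W, L ≤ #A ∧ L ≤ #B ∧ IsSparsePair (F i) δ A B

theorem IsSparsePair.mono_left {G : SimpleGraph V} {δ : ℝ} {A A' B : Finset V}
    (h : IsSparsePair G δ A B) (hA : A' ⊆ A) : IsSparsePair G δ A' B :=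
  ⟨h.disjoint.mono_left hA, fun v hv ↦ h.card_le v (hA hv)⟩

theorem IsSparsePair.card_interedges_le {G : SimpleGraph V} [DecidableRel G.Adj] {δ : ℝ}
    {A B : Finset V} (h : IsSparsePair G δ A B) : (#(G.interedges A B) : ℝ) ≤ δ * (#A * #B) := by
  have hdeg : ∀ v ∈ A, (#{w ∈ B | G.Adj v w} : ℝ) ≤ δ * #B := fun v hv ↦ by
    convert h.card_le v hv
  have hsum : #(G.interedges A B) = ∑ v ∈ A, #{w ∈ B | G.Adj v w} := by
    simp only [SimpleGraph.interedges_def, card_filter, sum_product]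
  calc
    (#(G.interedges A B) : ℝ) = ∑ v ∈ A, (#{w ∈ B | G.Adj v w} : ℝ) := mod_cast hsum
    _ ≤ #A • (δ * #B) := sum_le_card_nsmul _ _ _ hdeg
    _ = δ * (#A * #B) := by rw [nsmul_eq_mul]; ring

theorem IsSparsePair.exists_subset_swap {G : SimpleGraph V} {δ : ℝ} {A B : Finset V}
    (h : IsSparsePair G δ A B) (hδ : 0 < δ) (hA : A.Nonempty) :
    ∃ B' ⊆ B, #B ≤ 2 * #B' ∧ IsSparsePair G (2 * δ) B' A := by
  classical
  let p w := (#{v ∈ A | G.Adj w v} : ℝ) ≤ 2 * δ * #A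
  refine ⟨{w ∈ B | p w}, filter_subset .., ?_,
    h.disjoint.symm.mono_left (filter_subset ..), fun w hw ↦ (mem_filter.1 hw).2⟩
  have hcount : #{w ∈ B | ¬ p w} • (2 * δ * #A) ≤ #A • (δ * #B) :=
    card_nsmul_le_card_nsmul G.Adj (fun w hw ↦ (not_le.1 (mem_filter.1 hw).2).le) fun v hv ↦ by
      refine le_trans ?_ (h.card_le v hv)
      simp only [bipartiteBelow, G.adj_comm v]
      gcongr
      exact filter_subset ..
  have hbad : 2 * #{w ∈ B | ¬ p w} ≤ #B := by
    have hpos : 0 < δ * #A := by positivity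
    have : (δ * #A) * (2 * #{w ∈ B | ¬ p w}) ≤ (δ * #A) * #B := by
      simp only [nsmul_eq_mul] at hcount
      linarith
    exact_mod_cast le_of_mul_le_mul_left this hpos
  linarith [card_filter_add_card_filter_not (s := B) p]

open Classical in
theorem exists_vertex_of_not_hasSparsePair {F : ι → SimpleGraph V} {δ : ℝ} {L : ℕ} {W : Finset V}
    (h : ¬ HasSparsePair F δ L W) (c : α → ι) {S : Finset α} {X : Finset V} {C : α → Finset V}
    (hXW : X ⊆ W) (hX : X.Nonempty) (hXcard : #S * L ≤ #X) (hdisj : ∀ i ∈ S, Disjoint X (C i))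
    (hC : ∀ i ∈ S, C i ⊆ W ∧ L ≤ #(C i)) :
    ∃ v ∈ X, ∀ i ∈ S, δ * #(C i) ≤ #{w ∈ C i | (F (c i)).Adj v w} := by
  by_contra! hbad
  obtain ⟨v₀, hv₀⟩ := hX
  have : Nonempty α := ⟨(hbad v₀ hv₀).choose⟩
  choose! f hfS hf using hbad
  obtain ⟨i, hi, hcard⟩ :=
    exists_le_card_fiber_of_mul_le_card_of_maps_to hfS ⟨f v₀, hfS v₀ hv₀⟩ hXcard
  refine h ⟨c i, {v ∈ X | f v = i}, (filter_subset ..).trans hXW, C i, (hC i hi).1, hcard,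
    (hC i hi).2, (hdisj i hi).mono_left (filter_subset ..), fun v hv ↦ ?_⟩
  obtain ⟨hvX, rfl⟩ := mem_filter.1 hv
  exact (hf v hvX).le

theorem exists_colored_copy_of_not_hasSparsePair [Nonempty V] {F : ι → SimpleGraph V} {δ : ℝ}
    (hδ : 0 < δ) (hδ1 : δ ≤ 1) {L : ℕ} (hL : 0 < L) {W : Finset V} (h : ¬ HasSparsePair F δ L W)
    (c : Sym2 α → ι) (S : Finset α) {C : α → Finset V} (hdisj : Pairwise (Disjoint on C))
    (hCW : ∀ i, C i ⊆ W) (hC : ∀ i ∈ S, (#S * L : ℝ) ≤ δ ^ #S * #(C i)) :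
    ∃ φ : α → V, ∀ i ∈ S, φ i ∈ C i ∧ ∀ j ∈ S, i ≠ j → (F (c s(i, j))).Adj (φ i) (φ j) := by
  classical
  induction S using Finset.induction generalizing C with
  | empty => exact ⟨fun _ ↦ Classical.arbitrary V, by simp⟩
  | insert x S hx ih =>
    have hL' : (0 : ℝ) < L := mod_cast hL
    rw [card_insert_of_notMem hx] at hC
    have hcard : ∀ i ∈ insert x S, (#S + 1) * L ≤ #(C i) := fun i hi ↦ by
      have := (hC i hi).trans (mul_le_of_le_one_left (by positivity) (pow_le_one₀ hδ.le hδ1))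
      exact_mod_cast this
    have hxcard := hcard x (mem_insert_self x S)
    have hne : ∀ i ∈ S, i ≠ x := fun i hi ↦ ne_of_mem_of_not_mem hi hx
    obtain ⟨v, hv, hdeg⟩ := exists_vertex_of_not_hasSparsePair h (fun i ↦ c s(x, i)) (hCW x)
      (card_pos.1 (by nlinarith)) (by nlinarith) (fun i hi ↦ hdisj (hne i hi).symm)
      fun i hi ↦ ⟨hCW i, by nlinarith [hcard i (mem_insert_of_mem hi)]⟩
    obtain ⟨φ, hφ⟩ := ih (C := fun i ↦ {w ∈ C i | (F (c s(x, i))).Adj v w})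
      (fun i j hij ↦ disjoint_filter_filter (hdisj hij)) (fun i ↦ (filter_subset ..).trans (hCW i))
      fun i hi ↦ calc
        (#S * L : ℝ) ≤ (#S + 1 : ℕ) * L := by push_cast; linarith
        _ ≤ δ ^ #S * (δ * #(C i)) := by
          rw [← mul_assoc, ← pow_succ]; exact hC i (mem_insert_of_mem hi)
        _ ≤ _ := by gcongr; exact hdeg i hi
    simp only [mem_filter] at hφ
    refine ⟨update φ x v, ?_⟩
    simp +contextual only [forall_mem_insert, update_self, update_of_ne, ne_eq, hne,
      not_false_eq_true, not_true_eq_false, false_imp_iff, true_and, forall_const]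
    refine ⟨⟨hv, fun i hi _ ↦ (hφ i hi).1.2⟩, fun i hi ↦ ⟨(hφ i hi).1.1, ?_, (hφ i hi).2⟩⟩
    rw [Sym2.eq_swap]
    exact (hφ i hi).1.2.symm

theorem exists_forall_hasSparsePair_of_not_isIndContained [Finite α] (H : SimpleGraph α)
    {δ : ℝ} (hδ : 0 < δ) (hδ1 : δ ≤ 1) :
    ∃ D : ℕ, 0 < D ∧ ∀ {V : Type*} {G : SimpleGraph V}, ¬ H ⊴ G → ∀ {L : ℕ} {W : Finset V},
      0 < L → D * L ≤ #W → HasSparsePair (fun b ↦ cond b G Gᶜ) δ L W := by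
  classical
  have := Fintype.ofFinite α
  set k := Fintype.card α with hk
  set t := ⌈k / δ ^ k⌉₊
  refine ⟨k * t + 1, by positivity, fun {V G} hG {L W} hL hW ↦ ?_⟩
  by_contra hpair
  have : Nonempty V := (card_pos.1 ((Nat.mul_pos (by positivity) hL).trans_le hW)).to_type
  obtain ⟨C, hdisj, hC⟩ := exists_pairwise_disjoint_subsets (α := α) (t := t * L) (W := W)
    (by linarith)
  have hcard : (k * L : ℝ) ≤ δ ^ k * (t * L : ℕ) := by
    have : k ≤ δ ^ k * t := (div_le_iff₀' (by positivity)).1 (Nat.le_ceil _)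
    push_cast
    rw [← mul_assoc]
    gcongr
  obtain ⟨φ, hφ⟩ := exists_colored_copy_of_not_hasSparsePair hδ hδ1 hL hpair
    (fun e ↦ decide (e ∈ H.edgeSet)) univ hdisj (fun i ↦ (hC i).1)
    fun i _ ↦ by rw [(hC i).2, card_univ, ← hk]; exact hcard
  have hadj : ∀ i j, i ≠ j → (cond (decide (H.Adj i j)) G Gᶜ).Adj (φ i) (φ j) := fun i j hij ↦
    (hφ i (mem_univ i)).2 j (mem_univ j) hij
  have hφ_inj : Injective φ := fun i j hφij ↦ by_contra fun hij ↦ (hadj i j hij).ne hφij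
  refine hG ⟨⟨⟨φ, hφ_inj⟩, fun {i j} ↦ ?_⟩⟩
  change G.Adj (φ i) (φ j) ↔ H.Adj i j
  by_cases hij : i = j
  · simp [hij]
  · by_cases hH : H.Adj i j <;> simpa [hH, hφ_inj.ne hij] using hadj i j hij

theorem edgeCountIn_eq_card_filter (G : SimpleGraph V) [DecidablePred (· ∈ G.edgeSet)]
    (U : Finset V) : edgeCountIn G U = #{e ∈ U.sym2 | e ∈ G.edgeSet} := by
  rw [edgeCountIn, ← Set.ncard_coe_finset]
  congr 1
  ext e
  simp [mem_sym2_iff, and_comm]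

theorem edgeCountIn_add_edgeCountIn_compl (G : SimpleGraph V) (U : Finset V) :
    edgeCountIn G U + edgeCountIn Gᶜ U = (#U).choose 2 := by
  classical
  rw [edgeCountIn_eq_card_filter, edgeCountIn_eq_card_filter, ← Sym2.card_image_offDiag,
    ← card_union_of_disjoint]
  · congr 1
    ext ⟨x, y⟩
    simp only [mem_union, mem_filter, mk_mem_sym2_iff, SimpleGraph.mem_edgeSet,
      SimpleGraph.compl_adj, mem_image, mem_offDiag, Prod.exists, uncurry_apply_pair, Sym2.eq_iff]
    grind [SimpleGraph.Adj.ne]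
  · refine disjoint_filter.2 ?_
    rintro ⟨x, y⟩ -
    simp +contextual

theorem edgeCountIn_le_choose_two (G : SimpleGraph V) (U : Finset V) :
    edgeCountIn G U ≤ (#U).choose 2 :=
  edgeCountIn_add_edgeCountIn_compl G U ▸ Nat.le_add_right ..

theorem edgeCountIn_union_le [DecidableEq V] (G : SimpleGraph V) [DecidableRel G.Adj]
    (A B : Finset V) :
    edgeCountIn G (A ∪ B) ≤ edgeCountIn G A + edgeCountIn G B + #(G.interedges A B) := by
  simp only [edgeCountIn_eq_card_filter]
  have hsub : {e ∈ (A ∪ B).sym2 | e ∈ G.edgeSet} ⊆ {e ∈ A.sym2 | e ∈ G.edgeSet} ∪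
      {e ∈ B.sym2 | e ∈ G.edgeSet} ∪ (G.interedges A B).image Sym2.mk.uncurry := by
    rintro ⟨x, y⟩
    simp only [mem_union, mem_filter, mk_mem_sym2_iff, SimpleGraph.mem_edgeSet, mem_image,
      SimpleGraph.mem_interedges_iff, Prod.exists, uncurry_apply_pair, Sym2.eq_iff]
    grind [SimpleGraph.adj_comm]
  exact (card_le_card hsub).trans <| (card_union_le ..).trans <|
    add_le_add (card_union_le ..) card_image_le

/-- `U` is a set of `2 ^ b * m` vertices that came out of `b` successive doublings, the edge density
of `G` on `U` being at most `(1 / 2) ^ b + η`. -/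
structure IsSparseDoubling (G : SimpleGraph V) (η : ℝ) (m b : ℕ) (U : Finset V) : Prop where
  card_eq : #U = 2 ^ b * m
  edgeCountIn_le : (edgeCountIn G U : ℝ) ≤ ((1 / 2) ^ b + η) * (#U).choose 2

theorem exists_isSparseDoubling_zero (G : SimpleGraph V) {η : ℝ} (hη : 0 ≤ η) {m : ℕ}
    {W : Finset V} (hW : m ≤ #W) : ∃ U ⊆ W, IsSparseDoubling G η m 0 U := by
  obtain ⟨U, hUW, hU⟩ := exists_subset_card_eq hW
  refine ⟨U, hUW, by simpa using hU, ?_⟩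
  calc
    (edgeCountIn G U : ℝ) ≤ (#U).choose 2 := mod_cast edgeCountIn_le_choose_two G U
    _ ≤ ((1 / 2) ^ 0 + η) * (#U).choose 2 := le_mul_of_one_le_left (by positivity) (by simpa)

-- Since `(2u).choose 2 = 2 * u.choose 2 + u ^ 2` with `u.choose 2 ≤ u ^ 2 / 2`, the pairs inside
-- the halves are at most half of all pairs, and only they carry the density above `η`.
theorem IsSparseDoubling.union [DecidableEq V] {G : SimpleGraph V} {η : ℝ} {m b : ℕ}
    {U₁ U₂ : Finset V} (h₁ : IsSparseDoubling G η m b U₁) (h₂ : IsSparseDoubling G η m b U₂)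
    (h : IsSparsePair G η U₁ U₂) : IsSparseDoubling G η m (b + 1) (U₁ ∪ U₂) := by
  have hcard : #(U₁ ∪ U₂) = 2 * #U₁ := by
    rw [card_union_of_disjoint h.disjoint, h₂.card_eq, h₁.card_eq]; ring
  have hU₂ : #U₂ = #U₁ := h₂.card_eq.trans h₁.card_eq.symm
  refine ⟨by rw [hcard, h₁.card_eq]; ring, ?_⟩
  have hunion : (edgeCountIn G (U₁ ∪ U₂) : ℝ) ≤
      edgeCountIn G U₁ + edgeCountIn G U₂ + η * (#U₁ * #U₂) := by
    classical
    grw [← h.card_interedges_le]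
    exact_mod_cast edgeCountIn_union_le G U₁ U₂
  have he₁ := h₁.edgeCountIn_le
  have he₂ := h₂.edgeCountIn_le
  rw [hU₂] at he₂ hunion
  rw [hcard]
  simp only [Nat.cast_choose_two] at he₁ he₂ ⊢
  have : (0 : ℝ) ≤ (1 / 2) ^ b * #U₁ := by positivity
  push_cast
  rw [pow_succ]
  linarith

theorem IsSparsePair.exists_isSparseDoubling_succ [DecidableEq V] {G : SimpleGraph V} {δ : ℝ}
    {A B : Finset V} (h : IsSparsePair G δ A B) (hδ : 0 < δ) {m b N : ℕ} (hm : 0 < m)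
    (hA : N ≤ #A) (hB : 2 * N ≤ #B)
    (hN : ∀ W' ⊆ A ∪ B, N ≤ #W' → ∃ U ⊆ W', IsSparseDoubling G (2 * δ) m b U) :
    ∃ U ⊆ A ∪ B, IsSparseDoubling G (2 * δ) m (b + 1) U := by
  obtain ⟨U₁, hU₁A, hU₁⟩ := hN A subset_union_left hA
  have hU₁_nonempty : U₁.Nonempty := card_pos.1 (by rw [hU₁.card_eq]; positivity)
  obtain ⟨B', hB'B, hB', hpair⟩ := (h.mono_left hU₁A).exists_subset_swap hδ hU₁_nonempty
  obtain ⟨U₂, hU₂B', hU₂⟩ := hN B' (hB'B.trans subset_union_right) (by lia)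
  exact ⟨U₂ ∪ U₁, union_comm A B ▸ union_subset_union (hU₂B'.trans hB'B) hU₁A,
    hU₂.union hU₁ (hpair.mono_left hU₂B')⟩

theorem exists_isSparseDoubling [Fintype ι] [Nonempty ι] {F : ι → SimpleGraph V} {δ : ℝ}
    (hδ : 0 < δ) {D : ℕ} (hD : 0 < D)
    (hF : ∀ {L : ℕ} {W : Finset V}, 0 < L → D * L ≤ #W → HasSparsePair F δ L W) {m : ℕ}
    (hm : 0 < m) {s : ℕ} {a : ι → ℕ} (ha : ∑ i, a i ≤ s) {W : Finset V}
    (hW : (2 * D) ^ s * m ≤ #W) :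
    ∃ i, ∃ U ⊆ W, IsSparseDoubling (F i) (2 * δ) m (a i) U := by
  classical
  by_cases! hzero : ∃ i, a i = 0
  · obtain ⟨i, hi⟩ := hzero
    have hm' : m ≤ #W := (Nat.le_mul_of_pos_left m (by positivity)).trans hW
    exact ⟨i, by simpa only [hi] using exists_isSparseDoubling_zero (F i) (by positivity) hm'⟩
  match s with
  | 0 =>
    have i := Classical.arbitrary ι
    exact absurd (sum_eq_zero_iff.1 (Nat.le_zero.1 ha) i (mem_univ i)) (hzero i)
  | s + 1 =>
  set N := (2 * D) ^ s * m
  have hNW : D * (2 * N) ≤ #W := (by ring : _ = (2 * D) ^ (s + 1) * m).trans_le hW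
  obtain ⟨i, A, hAW, B, hBW, hA, hB, hpair⟩ := hF (by positivity) hNW
  obtain ⟨b, hb⟩ := Nat.exists_eq_succ_of_ne_zero (hzero i)
  have hsum : ∑ j, update a i b j ≤ s := by
    refine Nat.le_of_lt_succ (lt_of_lt_of_le (sum_lt_sum (fun j _ ↦ ?_) ⟨i, mem_univ i, ?_⟩) ha)
    · obtain rfl | hj := eq_or_ne j i <;> simp [*]
    · simp [hb]
  by_contra! hW_free
  have hdoubling : ∀ W' ⊆ A ∪ B, N ≤ #W' → ∃ U ⊆ W', IsSparseDoubling (F i) (2 * δ) m b U := by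
    intro W' hW' hNW'
    obtain ⟨j, U, hUW', hU⟩ := exists_isSparseDoubling hδ hD hF hm hsum hNW'
    obtain rfl | hj := eq_or_ne j i
    · exact ⟨U, hUW', by simpa using hU⟩
    · rw [update_of_ne hj] at hU
      exact absurd hU (hW_free j U (hUW'.trans (hW'.trans (union_subset hAW hBW))))
  obtain ⟨U, hU, hU'⟩ := hpair.exists_isSparseDoubling_succ hδ hm (by lia) hB hdoubling
  exact hW_free i U (hU.trans (union_subset hAW hBW)) (hb ▸ hU')

theorem exists_large_sparse_subset [Fintype ι] [Nonempty ι] {F : ι → SimpleGraph V} {δ : ℝ}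
    (hδ : 0 < δ) {D : ℕ} (hD : 0 < D)
    (hF : ∀ {L : ℕ} {W : Finset V}, 0 < L → D * L ≤ #W → HasSparsePair F δ L W) (a : ℕ)
    (W : Finset V) :
    ∃ i, ∃ U ⊆ W, #W ≤ 2 * (2 * D) ^ (Fintype.card ι * a) * #U ∧
      (edgeCountIn (F i) U : ℝ) ≤ ((1 / 2) ^ a + 2 * δ) * (#U).choose 2 := by
  set N := (2 * D) ^ (Fintype.card ι * a)
  have hNpos : 0 < N := by positivity
  obtain hW | hW := lt_or_ge #W N
  · obtain ⟨U, hUW, hU⟩ := exists_subset_card_eq (min_le_left #W 1)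
    have hchoose : (#U).choose 2 = 0 := Nat.choose_eq_zero_of_lt (by lia)
    have hedge := edgeCountIn_le_choose_two (F (Classical.arbitrary ι)) U
    refine ⟨Classical.arbitrary ι, U, hUW, ?_, ?_⟩
    · obtain h | h := Nat.eq_zero_or_pos #W
      · simp [h]
      · rw [hU, min_eq_right h]; lia
    · simpa [hchoose] using hedge
  · have hm : 0 < #W / N := Nat.div_pos hW hNpos
    obtain ⟨i, U, hUW, hU⟩ := exists_isSparseDoubling hδ hD hF hm (a := fun _ ↦ a) (by simp)
      (Nat.mul_div_le #W N)
    have hmU : #W / N ≤ #U := hU.card_eq ▸ Nat.le_mul_of_pos_left _ (by positivity)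
    refine ⟨i, U, hUW, ?_, hU.edgeCountIn_le⟩
    calc
      #W ≤ N * (#W / N + 1) := (Nat.lt_mul_div_succ #W hNpos).le
      _ ≤ N * (#U + #U) := by gcongr; lia
      _ = 2 * N * #U := by ring

theorem induced_Rodl_general [Finite α] (H : SimpleGraph α) {ε : ℝ} (hε : 0 < ε) :
    ∃ c : ℝ, 0 < c ∧ ∀ {V : Type*} (G : SimpleGraph V), ¬ H ⊴ G → ∀ W : Finset V,
      ∃ U ⊆ W, c * #W ≤ #U ∧
        ((edgeCountIn G U : ℝ) ≤ ε * (#U).choose 2 ∨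
          (1 - ε) * (#U).choose 2 ≤ (edgeCountIn G U : ℝ)) := by
  set δ := min 1 (ε / 4)
  have hδ : 0 < δ := by positivity
  obtain ⟨a, ha⟩ := exists_pow_lt_of_lt_one (half_pos hε) (one_half_lt_one (α := ℝ))
  obtain ⟨D, hD, hpair⟩ := exists_forall_hasSparsePair_of_not_isIndContained H hδ (min_le_left ..)
  refine ⟨(2 * (2 * D) ^ (Fintype.card Bool * a) : ℝ)⁻¹, by positivity, fun {V} G hG W ↦ ?_⟩
  obtain ⟨i, U, hUW, hcard, hedge⟩ := exists_large_sparse_subset hδ hD (hpair hG) a W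
  have hdensity : (1 / 2) ^ a + 2 * δ ≤ ε := by linarith [min_le_right 1 (ε / 4)]
  replace hedge := hedge.trans (mul_le_mul_of_nonneg_right hdensity (Nat.cast_nonneg _))
  refine ⟨U, hUW, (inv_mul_le_iff₀ (by positivity)).2 (mod_cast hcard), ?_⟩
  match i with
  | true => exact .inl hedge
  | false =>
    have hcompl : (edgeCountIn G U + edgeCountIn Gᶜ U : ℝ) = (#U).choose 2 :=
      mod_cast edgeCountIn_add_edgeCountIn_compl G U
    exact .inr (by simp only [cond_false] at hedge; linarith)

/-- (Rödl) For every graph `H` and every `ε > 0` there is `c₁ > 0` such that every graph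
`G` on `n` vertices with no induced copy of `H` has a subset `U` of at least `c₁·n`
vertices inducing at most `ε·C(|U|,2)` or at least `(1−ε)·C(|U|,2)` edges. -/
theorem induced_Rodl (k : ℕ) (H : SimpleGraph (Fin k)) (ε : ℝ) (hε : 0 < ε) :
    ∃ c₁ : ℝ, 0 < c₁ ∧
      ∀ (n : ℕ) (G : SimpleGraph (Fin n)),
        ¬ ContainsInduced H G →
        ∃ U : Finset (Fin n), c₁ * n ≤ (U.card : ℝ) ∧
          ((edgeCountIn G U : ℝ) ≤ ε * (U.card.choose 2 : ℝ) ∨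
            (1 - ε) * (U.card.choose 2 : ℝ) ≤ (edgeCountIn G U : ℝ)) := by
  obtain ⟨c, hc, hU⟩ := induced_Rodl_general H hε
  exact ⟨c, hc, fun n G hG ↦ by simpa using hU G (mt containsInduced_iff_isIndContained.2 hG) .univ⟩
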